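/- Let σ ∈ S_n and 1 ≤ l ≤ n+1, and set ψ(l) = inv3(η_l(σ)) − inv3(σ). Then monot(η_l(σ)) = monot(σ) + 1 if ψ(l) < ã(σ), and monot(η_l(σ)) = monot(σ) if ψ(l) ≥ ã(σ). Moreover ã(η_l(σ)) = ã(σ) − ψ(l) if ψ(l) < ã(σ), and ã(η_l(σ)) = n + 1 − ψ(l) if ψ(l) ≥ ã(σ). -/

import Mathlib

/-!
The insertion `η_l` relabels the letters of `σ` by the increasing map `x ↦ x + [l ≤ x]`, which fixes
`0`, so it changes no comparison among the positions `0, …, n`. Hence `inv3` and `monot` only gain the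
contribution of the last position `n + 1` (`inv3_insertion`, `monot_insertion`). For `n ≥ 1` that
position is of one of four kinds, according to whether `σ` ends with an ascent or a descent and
whether `l ≤ σ_n`; its 3-inversions are then counted by the letters of `σ` in an interval of values,
and since `σ` is a bijection that count is the length of the interval (`card_ent_Ico`):

* ascent, `l > σ_n` (double ascent): `ψ = l - 1 - σ_n < ã`;
* ascent, `l ≤ σ_n` (peak): `ψ = n + 1 - l ≥ ã`;
* descent, `l ≤ σ_n` (double descent): `ψ = σ_n - l < ã`;
* descent, `l > σ_n` (valley): `ψ = l - 1 ≥ ã`.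

Comparing with `ã(η_l(σ))`, which is `n + 2 - l` if `l > σ_n` and `l` otherwise, gives all claims.
-/

open Finset

namespace QEuler

/-! ### Entries of a permutation of `{1,…,n}`, with the convention `σ₀ = 0`.
A permutation `σ ∈ S_n` is represented by `Equiv.Perm (Fin n)`; its entry at
position `i ∈ {1,…,n}` is `(σ (i-1)).val + 1 ∈ {1,…,n}`, and all other
positions (in particular position `0`) carry the value `0`. -/

def ent {n : ℕ} (σ : Equiv.Perm (Fin n)) (i : ℕ) : ℕ :=
  if h : 1 ≤ i ∧ i ≤ n then ((σ ⟨i - 1, by omega⟩ : Fin n) : ℕ) + 1 else 0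

/-- Decorations: a set `D : Finset (Fin n)` records the decorated positions,
`j : Fin n` encoding position `j+1 ∈ {1,…,n}`.  `isDec D i` tells whether
position `i` is decorated (position `0` never is). -/
def isDec {n : ℕ} (D : Finset (Fin n)) (i : ℕ) : Bool :=
  if h : 1 ≤ i ∧ i ≤ n then decide ((⟨i - 1, by omega⟩ : Fin n) ∈ D) else false

/-- Number of decorated positions among `{1,…,n}` for a decoration predicate. -/
def decCount (n : ℕ) (D : ℕ → Bool) : ℕ :=
  ((Finset.Icc 1 n).filter fun i => D i = true).card

/-! ### Major index and reverse major index -/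

/-- Major index of the word `E 1, E 2, …, E n`. -/
def maj (n : ℕ) (E : ℕ → ℕ) : ℕ :=
  ∑ i ∈ Finset.Icc 1 (n - 1), if E (i + 1) < E i then i else 0

/-- Reverse major index: the major index of the reversed word `E n, …, E 1`. -/
def revmaj (n : ℕ) (E : ℕ → ℕ) : ℕ := maj n fun i => E (n + 1 - i)

/-! ### Decreasing runs and schedule numbers -/

/-- The word is strictly decreasing along consecutive positions `p,…,q`. -/
def decOn (E : ℕ → ℕ) (p q : ℕ) : Prop := ∀ t ∈ Finset.Ico p q, E (t + 1) < E t

instance (E : ℕ → ℕ) (p q : ℕ) : Decidable (decOn E p q) := by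
  unfold decOn; infer_instance

/-- Start of the maximal strictly decreasing consecutive run containing position `i`. -/
def runStart (E : ℕ → ℕ) (i : ℕ) : ℕ :=
  Nat.find (show ∃ p, decOn E p i from ⟨i, fun t ht => absurd ht (by simp)⟩)

/-- End of the maximal strictly decreasing consecutive run containing position `i`
(positions are `0,…,n`). -/
def runEnd (n : ℕ) (E : ℕ → ℕ) (i : ℕ) : ℕ :=
  Nat.findGreatest (fun q => decOn E i q) n

/-- The schedule number of a decorated permutation (given by its entry word `E` on
positions `0,…,n`, with `E 0 = 0`, and decoration predicate `D`) at position `i`.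
If `σ_i` is undecorated and lies in run `r_j` it counts the undecorated entries of `r_j`
larger than `σ_i` plus the undecorated entries of `r_{j-1}` smaller than `σ_i`;
if `σ_i` is decorated it counts the undecorated entries of `r_j` smaller than `σ_i`
plus the undecorated entries of `r_{j+1}` larger than `σ_i`. -/
def schedNum (n : ℕ) (E : ℕ → ℕ) (D : ℕ → Bool) (i : ℕ) : ℕ :=
  if D i = true then
    ((Finset.Icc (runStart E i) (runEnd n E i)).filter fun t => D t = false ∧ E t < E i).card
      + (if runEnd n E i < n then
          ((Finset.Icc (runEnd n E i + 1) (runEnd n E (runEnd n E i + 1))).filter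
            fun t => D t = false ∧ E i < E t).card
        else 0)
  else
    ((Finset.Icc (runStart E i) (runEnd n E i)).filter fun t => D t = false ∧ E i < E t).card
      + (if runStart E i = 0 then 0 else
          ((Finset.Icc (runStart E (runStart E i - 1)) (runStart E i - 1)).filter
            fun t => D t = false ∧ E t < E i).card)

/-! ### Cyclic runs -/

/-- `σ_i,…,σ_j` is a cyclic (decreasing) run: for some shift `k`, the residues
`σ_t + k (mod n+1)` are strictly decreasing for `t = i,…,j`. -/
def IsCyclicRun (n : ℕ) (E : ℕ → ℕ) (i j : ℕ) : Prop :=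
  i ≤ j ∧ j ≤ n ∧ ∃ k : ℕ, ∀ t ∈ Finset.Ico i j, (E (t + 1) + k) % (n + 1) < (E t + k) % (n + 1)

/-- A cyclic run which cannot be extended to the left. -/
def LeftMaximalRun (n : ℕ) (E : ℕ → ℕ) (i j : ℕ) : Prop :=
  IsCyclicRun n E i j ∧ (i = 0 ∨ ¬ IsCyclicRun n E (i - 1) j)

/-- A cyclic run which cannot be extended to the right. -/
def RightMaximalRun (n : ℕ) (E : ℕ → ℕ) (i j : ℕ) : Prop :=
  IsCyclicRun n E i j ∧ (j = n ∨ ¬ IsCyclicRun n E i (j + 1))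

/-! ### Double ascents, descents, peaks, valleys; `inv3` and `monot` -/

def DblAsc (E : ℕ → ℕ) (j : ℕ) : Prop := E (j - 2) < E (j - 1) ∧ E (j - 1) < E j
def DblDesc (E : ℕ → ℕ) (j : ℕ) : Prop := E (j - 1) < E (j - 2) ∧ E j < E (j - 1)
def IsPeak (E : ℕ → ℕ) (j : ℕ) : Prop := E (j - 2) < E (j - 1) ∧ E j < E (j - 1)
def IsValley (E : ℕ → ℕ) (j : ℕ) : Prop := E (j - 1) < E (j - 2) ∧ E (j - 1) < E j

instance (E : ℕ → ℕ) (j : ℕ) : Decidable (DblAsc E j) := by unfold DblAsc; infer_instance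
instance (E : ℕ → ℕ) (j : ℕ) : Decidable (DblDesc E j) := by unfold DblDesc; infer_instance
instance (E : ℕ → ℕ) (j : ℕ) : Decidable (IsPeak E j) := by unfold IsPeak; infer_instance
instance (E : ℕ → ℕ) (j : ℕ) : Decidable (IsValley E j) := by unfold IsValley; infer_instance

/-- `(i,j)` is a 3-inversion. -/
def Inv3Pair (E : ℕ → ℕ) (i j : ℕ) : Prop :=
  (DblAsc E j ∧ E (j - 1) < E i ∧ E i < E j) ∨
  (DblDesc E j ∧ E j < E i ∧ E i < E (j - 1)) ∨
  (IsPeak E j ∧ E j < E i) ∨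
  (IsValley E j ∧ E i < E j)

instance (E : ℕ → ℕ) (i j : ℕ) : Decidable (Inv3Pair E i j) := by
  unfold Inv3Pair; infer_instance

/-- Number of 3-inversions of the word `E 1, …, E n` (with the convention `E 0 = 0`). -/
def inv3 (n : ℕ) (E : ℕ → ℕ) : ℕ :=
  ((Finset.Icc 1 n ×ˢ Finset.Icc 1 n).filter fun p => p.1 < p.2 ∧ Inv3Pair E p.1 p.2).card

/-- Number of double ascents and double descents. -/
def monot (n : ℕ) (E : ℕ → ℕ) : ℕ :=
  ((Finset.Icc 2 n).filter fun j => DblAsc E j ∨ DblDesc E j).card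

/-! ### Alternating permutations, `31-2` patterns and Chebikin's statistic -/

/-- `σ₁ > σ₂ < σ₃ > ⋯`. -/
def IsAlternating (n : ℕ) (E : ℕ → ℕ) : Prop :=
  ∀ i ∈ Finset.Icc 1 (n - 1), if Odd i then E (i + 1) < E i else E i < E (i + 1)

instance (n : ℕ) (E : ℕ → ℕ) : Decidable (IsAlternating n E) := by
  unfold IsAlternating; infer_instance

/-- The finset of alternating permutations of `{1,…,n}`. -/
def altPerms (n : ℕ) : Finset (Equiv.Perm (Fin n)) :=
  Finset.univ.filter fun σ => IsAlternating n (ent σ)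

/-- Number of `31-2` patterns: pairs `(i,j)` with `i+1 < j ≤ n` and `σ_j > σ_i > σ_{i+1}`. -/
def pat312 (n : ℕ) (E : ℕ → ℕ) : ℕ :=
  ((Finset.Icc 1 n ×ˢ Finset.Icc 1 n).filter fun p =>
    p.1 + 1 < p.2 ∧ E (p.1 + 1) < E p.1 ∧ E p.1 < E p.2).card

/-- Chebikin's alternating inversion statistic `î`. -/
def chebi (n : ℕ) (E : ℕ → ℕ) : ℕ :=
  ∑ i ∈ Finset.Icc 1 (n - 1),
    ((Finset.Icc (i + 1) n).filter fun j => if Odd i then E j < E i else E i < E j).card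

/-! ### Insertion `η_l`, structural attribute `ã`, the shift `k + τ` and `δ_k` -/

/-- The entry word of the insertion `η_l(σ) ∈ S_{n+1}` of the value `l` at the end of `σ ∈ S_n`. -/
def etaEnt (n l : ℕ) (E : ℕ → ℕ) (i : ℕ) : ℕ :=
  if i = n + 1 then l
  else if 1 ≤ i ∧ i ≤ n then (if l ≤ E i then E i + 1 else E i) else 0

/-- Structural attribute `ã(σ)` of `σ ∈ S_n`. -/
def atil (n : ℕ) (E : ℕ → ℕ) : ℕ :=
  if E (n - 1) < E n then n + 1 - E n else E n

/-- The entry word of `k + τ ∈ S_{n+1}` for `τ ∈ S_n`: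
`σ₀ = 0` and `σ_{i+1}` is the representative of `k + τ_i (mod n+1)` in `{1,…,n+1}`. -/
def shiftEnt (n k : ℕ) (E : ℕ → ℕ) (i : ℕ) : ℕ :=
  if i = 0 then 0
  else if (k + E (i - 1)) % (n + 1) = 0 then n + 1 else (k + E (i - 1)) % (n + 1)

/-- Position of the first (leftmost, among `1,…,n`) undecorated letter;
equals `n+1` if every position is decorated. -/
def firstUndecPos (n : ℕ) (D : ℕ → Bool) : ℕ :=
  Nat.find (show ∃ i, n < i ∨ (1 ≤ i ∧ D i = false) from ⟨n + 1, Or.inl (by omega)⟩)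

/-- `a(τ)`: the value of the first undecorated letter of `τ`. -/
def aVal (n : ℕ) (E : ℕ → ℕ) (D : ℕ → Bool) : ℕ := E (firstUndecPos n D)

/-- Decorations of the `k`-th descendant `δ_k(τ)`: position `1` is decorated iff
`k > n+1-a(τ)`, and for `i ≥ 2` position `i` is decorated iff position `i-1` of `τ` is. -/
def deltaDec (n k : ℕ) (D : ℕ → Bool) (aval : ℕ) (i : ℕ) : Bool :=
  if i = 0 then false
  else if i = 1 then decide (n + 1 - aval < k)
  else D (i - 1)

/-! ### Valley-decorated standardly labelled Dyck paths

A path of size `n` is encoded by its area word `a : Fin n → Fin n`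
(`a i` = number of whole squares between the `(i+1)`-st north step and the diagonal;
a word `a₁ ⋯ a_n` is the area word of a Dyck path iff `a₁ = 0` and `a_i ≤ a_{i-1} + 1`),
its labelling `w : Equiv.Perm (Fin n)`, and its decoration set `dv : Finset (Fin n)`
(`j` encoding the position `j+1`). -/

abbrev PathData (n : ℕ) := (Fin n → Fin n) × Equiv.Perm (Fin n) × Finset (Fin n)

/-- The area word, on positions `1,…,n`. -/
def aw {n : ℕ} (P : PathData n) (i : ℕ) : ℕ :=
  if h : 1 ≤ i ∧ i ≤ n then ((P.1 ⟨i - 1, by omega⟩ : Fin n) : ℕ) else 0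

/-- The labels, on positions `1,…,n`. -/
def lbl {n : ℕ} (P : PathData n) (i : ℕ) : ℕ := ent P.2.1 i

/-- Whether the `i`-th north step is decorated. -/
def pdec {n : ℕ} (P : PathData n) (i : ℕ) : Bool := isDec P.2.2 i

/-- The `i`-th north step is a contractible valley: `a_{i-1} > a_i`, or
`a_{i-1} = a_i` and `w_{i-1} < w_i`. -/
def ContractibleValley {n : ℕ} (P : PathData n) (i : ℕ) : Prop :=
  2 ≤ i ∧ i ≤ n ∧ (aw P i < aw P (i - 1) ∨ (aw P (i - 1) = aw P i ∧ lbl P (i - 1) < lbl P i))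

instance {n : ℕ} (P : PathData n) (i : ℕ) : Decidable (ContractibleValley P i) := by
  unfold ContractibleValley; infer_instance

/-- `P` encodes a genuine valley-decorated standardly labelled Dyck path:
the area word is valid, labels in a common column increase from bottom to top
(equivalently, consecutive north steps carry increasing labels), and every
decoration sits on a contractible valley. -/
def IsValidPath {n : ℕ} (P : PathData n) : Prop :=
  (1 ≤ n → aw P 1 = 0) ∧
  (∀ i ∈ Finset.Icc 2 n, aw P i ≤ aw P (i - 1) + 1) ∧
  (∀ i ∈ Finset.Icc 2 n, aw P i = aw P (i - 1) + 1 → lbl P (i - 1) < lbl P i) ∧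
  (∀ i ∈ Finset.Icc 1 n, pdec P i = true → ContractibleValley P i)

instance {n : ℕ} (P : PathData n) : Decidable (IsValidPath P) := by
  unfold IsValidPath; infer_instance

/-- The finset `stLD(n)^{•k}` of valley-decorated standardly labelled Dyck paths
of size `n` with exactly `k` decorated (contractible) valleys. -/
def stLD (n k : ℕ) : Finset (PathData n) :=
  Finset.univ.filter fun P => IsValidPath P ∧ P.2.2.card = k

/-- The area statistic. -/
def area {n : ℕ} (P : PathData n) : ℕ := ∑ i ∈ Finset.Icc 1 n, aw P i

/-- `(i,j)` is a primary diagonal inversion. -/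
def PrimaryDinv {n : ℕ} (P : PathData n) (i j : ℕ) : Prop :=
  aw P i = aw P j ∧ lbl P i < lbl P j ∧ pdec P i = false

/-- `(i,j)` is a secondary diagonal inversion. -/
def SecondaryDinv {n : ℕ} (P : PathData n) (i j : ℕ) : Prop :=
  aw P i = aw P j + 1 ∧ lbl P j < lbl P i ∧ pdec P i = false

instance {n : ℕ} (P : PathData n) (i j : ℕ) : Decidable (PrimaryDinv P i j) := by
  unfold PrimaryDinv; infer_instance
instance {n : ℕ} (P : PathData n) (i j : ℕ) : Decidable (SecondaryDinv P i j) := by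
  unfold SecondaryDinv; infer_instance

/-- The set of diagonal-inversion pairs `(i,j)`, `1 ≤ i < j ≤ n`. -/
def dinvPairs {n : ℕ} (P : PathData n) : Finset (ℕ × ℕ) :=
  (Finset.Icc 1 n ×ˢ Finset.Icc 1 n).filter fun p =>
    p.1 < p.2 ∧ (PrimaryDinv P p.1 p.2 ∨ SecondaryDinv P p.1 p.2)

/-- `dinv(P)`: number of primary and secondary diagonal inversions minus the
number of decorated valleys (a nonnegative quantity). -/
def dinv {n : ℕ} (P : PathData n) : ℕ := (dinvPairs P).card - P.2.2.card

/-! ### The diagonal word of a path -/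

/-- Position in the diagonal word of the label of the `i`-th north step:
labels are listed diagonal by diagonal, and within a diagonal in decreasing order. -/
def dwPos {n : ℕ} (P : PathData n) (i : ℕ) : ℕ :=
  ((Finset.Icc 1 n).filter fun i' =>
    aw P i' < aw P i ∨ (aw P i' = aw P i ∧ lbl P i ≤ lbl P i')).card

/-- The `j`-th letter of the diagonal word `dw(P)`. -/
def dwEnt {n : ℕ} (P : PathData n) (j : ℕ) : ℕ :=
  ∑ i ∈ (Finset.Icc 1 n).filter (fun i => dwPos P i = j), lbl P i

/-- Whether the `j`-th letter of the diagonal word is decorated. -/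
def dwDec {n : ℕ} (P : PathData n) (j : ℕ) : Bool :=
  decide (((Finset.Icc 1 n).filter fun i => dwPos P i = j ∧ pdec P i = true).Nonempty)

end QEuler

namespace QEuler

/-- All schedule numbers of the decorated permutation equal `1`. -/
def HasSchedOne (n : ℕ) (E : ℕ → ℕ) (D : ℕ → Bool) : Prop :=
  ∀ i ∈ Finset.Icc 1 n, schedNum n E D i = 1

instance (n : ℕ) (E : ℕ → ℕ) (D : ℕ → Bool) : Decidable (HasSchedOne n E D) := by
  unfold HasSchedOne; infer_instance

/-- The diagonal word of `P` is the decorated permutation `(σ, D)`. -/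
def DwEq {n : ℕ} (P : PathData n) (σ : Equiv.Perm (Fin n)) (D : Finset (Fin n)) : Prop :=
  (∀ j ∈ Finset.Icc 1 n, dwEnt P j = ent σ j) ∧ ∀ j ∈ Finset.Icc 1 n, dwDec P j = isDec D j

instance {n : ℕ} (P : PathData n) (σ : Equiv.Perm (Fin n)) (D : Finset (Fin n)) :
    Decidable (DwEq P σ D) := by
  unfold DwEq; infer_instance

end QEuler

open QEuler

lemma ent_zero {n : ℕ} (σ : Equiv.Perm (Fin n)) : ent σ 0 = 0 := by simp [ent]

lemma ent_bounds {n : ℕ} (σ : Equiv.Perm (Fin n)) {i : ℕ} (h1 : 1 ≤ i) (h2 : i ≤ n) :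
    1 ≤ ent σ i ∧ ent σ i ≤ n := by
  rw [ent, dif_pos ⟨h1, h2⟩]
  exact ⟨by omega, (σ ⟨i - 1, by omega⟩).2⟩

lemma ent_inj {n : ℕ} (σ : Equiv.Perm (Fin n)) {i j : ℕ} (hi1 : 1 ≤ i) (hi : i ≤ n)
    (hj1 : 1 ≤ j) (hj : j ≤ n) (h : ent σ i = ent σ j) : i = j := by
  rw [ent, ent, dif_pos ⟨hi1, hi⟩, dif_pos ⟨hj1, hj⟩] at h
  have := σ.injective (Fin.ext (Nat.succ_injective h))
  simp only [Fin.mk.injEq] at this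
  omega

/-- Every interval of values inside `{1, …, n}` is attained by as many positions as its length. -/
lemma card_ent_Ico {n : ℕ} (σ : Equiv.Perm (Fin n)) {a b : ℕ} (ha : 1 ≤ a) (hb : b ≤ n + 1) :
    ((Icc 1 n).filter fun i => a ≤ ent σ i ∧ ent σ i < b).card = b - a := by
  rw [← Nat.card_Ico a b]
  refine Finset.card_bij (fun i _ => ent σ i) ?_ ?_ ?_
  · intro i hi
    simpa using (mem_filter.1 hi).2
  · intro i hi j hj h
    simp only [mem_filter, mem_Icc] at hi hj
    exact ent_inj σ hi.1.1 hi.1.2 hj.1.1 hj.1.2 h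
  · intro v hv
    rw [mem_Ico] at hv
    set p : Fin n := σ.symm ⟨v - 1, by omega⟩ with hp
    have hval : ent σ (p + 1) = v := by
      rw [ent, dif_pos ⟨by omega, by omega⟩]
      have : (⟨(p : ℕ) + 1 - 1, by omega⟩ : Fin n) = p := Fin.ext (by simp)
      rw [this, hp, Equiv.apply_symm_apply]
      simp only
      omega
    refine ⟨p + 1, ?_, hval⟩
    simp only [mem_filter, mem_Icc, hval]
    omega

lemma etaEnt_last (n l : ℕ) (E : ℕ → ℕ) : etaEnt n l E (n + 1) = l := by simp [etaEnt]

/-- On the positions `0, …, n` the insertion is the relabelling `x ↦ x + [l ≤ x]`. Position `0`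
needs `1 ≤ l`, so that the conventional value `0` is not shifted. -/
lemma etaEnt_old {n l : ℕ} {E : ℕ → ℕ} (hl : 1 ≤ l) (h0 : E 0 = 0) {i : ℕ} (hi : i ≤ n) :
    etaEnt n l E i = if l ≤ E i then E i + 1 else E i := by
  unfold etaEnt
  rw [if_neg (by omega)]
  rcases Nat.eq_zero_or_pos i with rfl | h
  · simp [h0]; omega
  · rw [if_pos ⟨h, hi⟩]

lemma etaEnt_lt {n l : ℕ} {E : ℕ → ℕ} (hl : 1 ≤ l) (h0 : E 0 = 0) {i j : ℕ} (hi : i ≤ n)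
    (hj : j ≤ n) : etaEnt n l E i < etaEnt n l E j ↔ E i < E j := by
  rw [etaEnt_old hl h0 hi, etaEnt_old hl h0 hj]
  split_ifs <;> omega

/-- The insertion creates exactly the 3-inversions whose second position is `n + 1`. -/
lemma inv3_insertion {n l : ℕ} {E : ℕ → ℕ} (hl : 1 ≤ l) (h0 : E 0 = 0) :
    inv3 (n + 1) (etaEnt n l E) = inv3 n E +
      ((Icc 1 n).filter fun i => Inv3Pair (etaEnt n l E) i (n + 1)).card := by
  have hsplit : ((Icc 1 (n + 1) ×ˢ Icc 1 (n + 1)).filter fun p : ℕ × ℕ =>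
        p.1 < p.2 ∧ Inv3Pair (etaEnt n l E) p.1 p.2) =
      ((Icc 1 n ×ˢ Icc 1 n).filter fun p : ℕ × ℕ => p.1 < p.2 ∧ Inv3Pair E p.1 p.2) ∪
      ((Icc 1 n).filter fun i => Inv3Pair (etaEnt n l E) i (n + 1)).image fun i => (i, n + 1) := by
    have hold : ∀ i j, i ≤ n → j ≤ n → (Inv3Pair (etaEnt n l E) i j ↔ Inv3Pair E i j) := by
      intro i j hi hj
      simp only [Inv3Pair, DblAsc, DblDesc, IsPeak, IsValley]
      have h1 : j - 1 ≤ n := by omega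
      have h2 : j - 2 ≤ n := by omega
      simp only [etaEnt_lt hl h0, hi, hj, h1, h2]
    ext ⟨i, j⟩
    simp only [mem_filter, mem_product, mem_Icc, mem_union, mem_image, Prod.mk.injEq]
    constructor
    · rintro ⟨⟨hi, hj⟩, hij, h⟩
      rcases Nat.lt_or_ge n j with hn | hn
      · obtain rfl : j = n + 1 := by omega
        exact Or.inr ⟨i, ⟨by omega, h⟩, rfl, rfl⟩
      · exact Or.inl ⟨by omega, hij, (hold i j (by omega) hn).1 h⟩
    · rintro (⟨⟨hi, hj⟩, hij, h⟩ | ⟨i', ⟨hi, h⟩, rfl, rfl⟩)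
      · exact ⟨by omega, hij, (hold i j hi.2 hj.2).2 h⟩
      · exact ⟨by omega, by omega, h⟩
  unfold inv3
  rw [hsplit, card_union_of_disjoint, card_image_of_injective]
  · intro a b h
    exact (Prod.mk.inj h).1
  · rw [disjoint_left]
    rintro ⟨i, j⟩ h h'
    simp only [mem_filter, mem_product, mem_Icc, mem_image, Prod.mk.injEq] at h h'
    obtain ⟨_, _, _, h'⟩ := h'
    omega

lemma monot_insertion {n l : ℕ} {E : ℕ → ℕ} (hl : 1 ≤ l) (h0 : E 0 = 0) (hn : 1 ≤ n) :
    monot (n + 1) (etaEnt n l E) = monot n E +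
      if DblAsc (etaEnt n l E) (n + 1) ∨ DblDesc (etaEnt n l E) (n + 1) then 1 else 0 := by
  have hI : Icc 2 (n + 1) = insert (n + 1) (Icc 2 n) := by
    ext; simp only [mem_Icc, mem_insert]; omega
  have hold : ((Icc 2 n).filter fun j => DblAsc (etaEnt n l E) j ∨ DblDesc (etaEnt n l E) j) =
      (Icc 2 n).filter fun j => DblAsc E j ∨ DblDesc E j := by
    refine filter_congr fun j hj => ?_
    rw [mem_Icc] at hj
    have h1 : j - 1 ≤ n := by omega
    have h2 : j - 2 ≤ n := by omega
    simp only [DblAsc, DblDesc, etaEnt_lt hl h0, hj.2, h1, h2]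
  unfold monot
  rw [hI, filter_insert, hold]
  split_ifs
  · rw [card_insert_of_notMem (by simp)]
  · rfl

/-- Let `σ ∈ S_n`, `1 ≤ l ≤ n+1` and `ψ(l) = inv3(η_l(σ)) − inv3(σ)`.
Then `monot(η_l(σ)) = monot(σ) + 1` if `ψ(l) < ã(σ)` and `monot(η_l(σ)) = monot(σ)` if
`ψ(l) ≥ ã(σ)`; moreover `ã(η_l(σ)) = ã(σ) − ψ(l)` if `ψ(l) < ã(σ)` and
`ã(η_l(σ)) = n + 1 − ψ(l)` if `ψ(l) ≥ ã(σ)`. -/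
theorem monot_attribute_of_insertion {n : ℕ} (σ : Equiv.Perm (Fin n))
    (l : ℕ) (hl1 : 1 ≤ l) (hl2 : l ≤ n + 1) :
    ((inv3 (n + 1) (etaEnt n l (ent σ)) : ℤ) - (inv3 n (ent σ) : ℤ) < (atil n (ent σ) : ℤ) →
        monot (n + 1) (etaEnt n l (ent σ)) = monot n (ent σ) + 1) ∧
    ((atil n (ent σ) : ℤ) ≤ (inv3 (n + 1) (etaEnt n l (ent σ)) : ℤ) - (inv3 n (ent σ) : ℤ) →
        monot (n + 1) (etaEnt n l (ent σ)) = monot n (ent σ)) ∧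
    ((inv3 (n + 1) (etaEnt n l (ent σ)) : ℤ) - (inv3 n (ent σ) : ℤ) < (atil n (ent σ) : ℤ) →
        (atil (n + 1) (etaEnt n l (ent σ)) : ℤ)
          = (atil n (ent σ) : ℤ)
              - ((inv3 (n + 1) (etaEnt n l (ent σ)) : ℤ) - (inv3 n (ent σ) : ℤ))) ∧
    ((atil n (ent σ) : ℤ) ≤ (inv3 (n + 1) (etaEnt n l (ent σ)) : ℤ) - (inv3 n (ent σ) : ℤ) →
        (atil (n + 1) (etaEnt n l (ent σ)) : ℤ)
          = (n : ℤ) + 1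
              - ((inv3 (n + 1) (etaEnt n l (ent σ)) : ℤ) - (inv3 n (ent σ) : ℤ))) := by
  have h0 := ent_zero σ
  rcases Nat.eq_zero_or_pos n with rfl | hn
  -- The empty permutation: `ã = 0` by the convention `σ₀ = 0`, and `η_1` produces `1 ∈ S_1`.
  · obtain rfl : l = 1 := by omega
    have hi := inv3_insertion (n := 0) (E := ent σ) hl1 h0
    have hm : monot (0 + 1) (etaEnt 0 1 (ent σ)) = monot 0 (ent σ) := by simp [monot]
    have ha : atil 0 (ent σ) = 0 := by simp [atil, h0]
    have ha' : atil (0 + 1) (etaEnt 0 1 (ent σ)) = 1 := by simp [atil, etaEnt]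
    simp only [Icc_eq_empty_of_lt zero_lt_one, filter_empty, card_empty] at hi
    rw [hi, hm, ha, ha']
    simp
  obtain ⟨hs1, hs2⟩ := ent_bounds σ hn le_rfl
  have hne : ent σ (n - 1) ≠ ent σ n := by
    intro h
    rcases Nat.eq_zero_or_pos (n - 1) with hz | hz
    · rw [hz, h0] at h; omega
    · have := ent_inj σ hz (by omega) hn le_rfl h
      omega
  have hi := inv3_insertion (n := n) (E := ent σ) hl1 h0
  have hm := monot_insertion (n := n) (E := ent σ) hl1 h0 hn
  have hlast := etaEnt_last n l (ent σ)
  have hprev := etaEnt_old (n := n) (E := ent σ) hl1 h0 le_rfl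
  have hasc := etaEnt_lt (n := n) (E := ent σ) hl1 h0 (i := n - 1) (j := n) (by omega) le_rfl
  have hdesc := etaEnt_lt (n := n) (E := ent σ) hl1 h0 (i := n) (j := n - 1) le_rfl (by omega)
  have e1 : n + 1 - 1 = n := by omega
  have e2 : n + 1 - 2 = n - 1 := by omega
  simp only [DblAsc, DblDesc, e1, e2, hasc, hdesc, hlast] at hm
  -- It suffices to identify the new 3-inversions with the positions of values in `[a, b)`.
  have hcount : ∀ a b, 1 ≤ a → b ≤ n + 1 →
      (∀ i, 1 ≤ i → i ≤ n → (Inv3Pair (etaEnt n l (ent σ)) i (n + 1) ↔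
        a ≤ ent σ i ∧ ent σ i < b)) →
      inv3 (n + 1) (etaEnt n l (ent σ)) = inv3 n (ent σ) + (b - a) := by
    intro a b ha hb h
    rw [hi, ← card_ent_Ico σ ha hb]
    congr 2
    exact filter_congr fun i hi => h i (mem_Icc.1 hi).1 (mem_Icc.1 hi).2
  simp only [Inv3Pair, DblAsc, DblDesc, IsPeak, IsValley, e1, e2, hasc, hdesc, hlast] at hcount
  have hat : atil (n + 1) (etaEnt n l (ent σ)) = if ent σ n < l then n + 2 - l else l := by
    simp only [atil, e1, hlast, hprev]
    split_ifs <;> omega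
  have hat0 : atil n (ent σ) = if ent σ (n - 1) < ent σ n then n + 1 - ent σ n else ent σ n := rfl
  rw [hat, hat0, hm]
  rcases Nat.lt_or_ge (ent σ n) l with hl | hl <;>
    rcases Nat.lt_or_gt_of_ne hne with hd | hd
  · have key := hcount (ent σ n + 1) l (by omega) hl2 (by
      intro i h1 h2
      rw [hprev, etaEnt_old hl1 h0 h2]
      split_ifs <;> omega)
    rw [hprev, key]
    split_ifs <;> omega
  · have key := hcount 1 l le_rfl hl2 (by
      intro i h1 h2
      have := ent_bounds σ h1 h2
      rw [hprev, etaEnt_old hl1 h0 h2]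
      split_ifs <;> omega)
    rw [hprev, key]
    split_ifs <;> omega
  · have key := hcount l (n + 1) hl1 le_rfl (by
      intro i h1 h2
      have := ent_bounds σ h1 h2
      rw [hprev, etaEnt_old hl1 h0 h2]
      split_ifs <;> omega)
    rw [hprev, key]
    split_ifs <;> omega
  · have key := hcount l (ent σ n) hl1 (by omega) (by
      intro i h1 h2
      rw [hprev, etaEnt_old hl1 h0 h2]
      split_ifs <;> omega)
    rw [hprev, key]
    split_ifs <;> omega
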